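/- If the CDF G of W is regularly varying at zero with index β = 1, then the function A(t) = t ∫_0^{B(t)} G(1/u) du is regularly varying at infinity with index 1. -/

import Mathlib

open MeasureTheory ProbabilityTheory Filter

/-!
Put `φ u = G (1 / u)` and `I x = ∫_0^x φ`, so that `A t = t * I (B t)` and `φ (B t) = 1 / t`.
Since `φ` is decreasing with index `-1`, each of the intervals `(x / 2 ^ (k + 1), x / 2 ^ k]`
contributes asymptotically at least `x * φ x / 2` to `I x`; hence `x * φ x = o(I x)`. For `s ≥ 1`
the increment `I (s * x) - I x` is at most `(s - 1) * x * φ x`, so `I` is slowly varying. Being an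
inverse of `1 / φ`, which is increasing with index `1`, the function `B` tends to infinity with
index `1`. Monotonicity of `I` lets it absorb this asymptotic rescaling, so `I ∘ B` is slowly
varying and `A` has index `1`.
-/

section

open Set Topology

/-- Regular variation of `f` along the filter `l` (in practice `atTop` or `𝓝[>] 0`) with index `b`;
slow variation is the case `b = 0`. Unlike in the usual notion, `f` need not be positive. -/
def RegularlyVarying (f : ℝ → ℝ) (l : Filter ℝ) (b : ℝ) : Prop :=
  ∀ s > 0, Tendsto (fun t => f (s * t) / f t) l (𝓝 (s ^ b))

variable {f g φ : ℝ → ℝ} {l : Filter ℝ} {a b : ℝ}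

theorem regularlyVarying_id_atTop : RegularlyVarying (fun t => t) atTop 1 := by
  intro s _
  rw [Real.rpow_one]
  refine tendsto_const_nhds.congr' ?_
  filter_upwards [eventually_ne_atTop 0] with t ht
  rw [mul_div_cancel_right₀ s ht]

namespace RegularlyVarying

theorem congr' (hf : RegularlyVarying f atTop b) (hfg : f =ᶠ[atTop] g) :
    RegularlyVarying g atTop b := by
  intro s hs
  exact (hf s hs).congr' ((hfg.comp_tendsto (tendsto_id.const_mul_atTop hs)).div hfg)

theorem mul (hf : RegularlyVarying f l a) (hg : RegularlyVarying g l b) :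
    RegularlyVarying (fun t => f t * g t) l (a + b) := by
  intro s hs
  simpa only [mul_div_mul_comm, Real.rpow_add hs] using (hf s hs).mul (hg s hs)

theorem inv (hf : RegularlyVarying f l b) : RegularlyVarying (fun t => (f t)⁻¹) l (-b) := by
  intro s hs
  simpa only [inv_div, inv_div_inv, Real.rpow_neg hs.le]
    using (hf s hs).inv₀ (Real.rpow_pos_of_pos hs b).ne'

theorem comp_inv (hf : RegularlyVarying f (𝓝[>] 0) b) :
    RegularlyVarying (fun u => f u⁻¹) atTop (-b) := by
  intro s hs
  simpa only [Function.comp_def, mul_inv, Real.rpow_neg_eq_inv_rpow]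
    using (hf s⁻¹ (inv_pos.2 hs)).comp tendsto_inv_atTop_nhdsGT_zero

theorem of_one_le (h : ∀ s ≥ 1, Tendsto (fun t => f (s * t) / f t) atTop (𝓝 (s ^ b))) :
    RegularlyVarying f atTop b := by
  intro s hs
  rcases le_total 1 s with hs1 | hs1
  · exact h s hs1
  · have hinv := ((h s⁻¹ ((one_le_inv₀ hs).2 hs1)).comp (tendsto_id.const_mul_atTop hs)).inv₀
      (Real.rpow_pos_of_pos (inv_pos.2 hs) b).ne'
    simpa only [Function.comp_def, id, inv_mul_cancel_left₀ hs.ne', inv_div,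
      Real.inv_rpow hs.le, inv_inv] using hinv

theorem tendsto_div_of_monotoneOn {ι : Type*} {l : Filter ι} {x y : ι → ℝ} {c : ℝ}
    (hf : RegularlyVarying f atTop a) (hmono : MonotoneOn f (Ioi 0))
    (hf_nonneg : ∀ᶠ u in atTop, 0 ≤ f u) (hx : Tendsto x l atTop) (hc : 0 < c)
    (hyx : Tendsto (fun i => y i / x i) l (𝓝 c)) :
    Tendsto (fun i => f (y i) / f (x i)) l (𝓝 (c ^ a)) := by
  have hcont : Tendsto (fun d : ℝ => d ^ a) (𝓝 c) (𝓝 (c ^ a)) :=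
    Real.continuousAt_rpow_const c a (Or.inl hc.ne')
  have hx_pos := hx.eventually (eventually_gt_atTop 0)
  have hfx := hx.eventually hf_nonneg
  refine tendsto_order.2 ⟨fun p hp => ?_, fun q hq => ?_⟩
  · obtain ⟨d, hpd, hd, hdc⟩ : ∃ d, p < d ^ a ∧ 0 < d ∧ d < c :=
      ((tendsto_nhdsWithin_of_tendsto_nhds hcont |>.eventually_const_lt hp).and
        (Ioo_mem_nhdsLT hc)).exists
    filter_upwards [hx_pos, hfx, ((hf d hd).comp hx).eventually_const_lt hpd,
      hyx.eventually_const_lt hdc] with i hxi hfxi hpi hdi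
    have hdy : d * x i < y i := (lt_div_iff₀ hxi).1 hdi
    have hd_pos : 0 < d * x i := mul_pos hd hxi
    exact hpi.trans_le
      (div_le_div_of_nonneg_right (hmono hd_pos (hd_pos.trans hdy) hdy.le) hfxi)
  · obtain ⟨d, hdq, hcd⟩ : ∃ d, d ^ a < q ∧ c < d :=
      ((tendsto_nhdsWithin_of_tendsto_nhds hcont |>.eventually_lt_const hq).and
        (self_mem_nhdsWithin (s := Ioi c))).exists
    filter_upwards [hx_pos, hfx, ((hf d (hc.trans hcd)).comp hx).eventually_lt_const hdq,
      hyx.eventually_const_lt hc, hyx.eventually_lt_const hcd] with i hxi hfxi hqi hyi hdi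
    have hdy : y i < d * x i := (div_lt_iff₀ hxi).1 hdi
    have hy_pos : 0 < y i := (div_pos_iff_of_pos_right hxi).1 hyi
    exact (div_le_div_of_nonneg_right (hmono hy_pos (hy_pos.trans hdy) hdy.le) hfxi).trans_lt hqi

theorem comp_of_monotoneOn (hf : RegularlyVarying f atTop a) (hmono : MonotoneOn f (Ioi 0))
    (hf_nonneg : ∀ᶠ u in atTop, 0 ≤ f u) (hg : RegularlyVarying g atTop b)
    (hg_top : Tendsto g atTop atTop) : RegularlyVarying (fun t => f (g t)) atTop (b * a) := by
  intro s hs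
  rw [Real.rpow_mul hs.le]
  exact hf.tendsto_div_of_monotoneOn hmono hf_nonneg hg_top (Real.rpow_pos_of_pos hs b) (hg s hs)

end RegularlyVarying

theorem tendsto_atTop_of_monotoneOn_of_rightInverse (hmono : MonotoneOn f (Ioi 0))
    (hg_pos : ∀ᶠ t in atTop, 0 < g t) (hfg : ∀ᶠ t in atTop, f (g t) = t) :
    Tendsto g atTop atTop := by
  refine tendsto_atTop.2 fun M => ?_
  filter_upwards [hg_pos, hfg, eventually_gt_atTop (f (max M 1))] with t hgt hft ht
  rw [← hft] at ht
  have hlt : max M 1 < g t := hmono.reflect_lt (mem_Ioi.2 (lt_max_of_lt_right one_pos)) hgt ht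
  exact (le_max_left M 1).trans hlt.le

theorem RegularlyVarying.rightInverse_of_monotoneOn (hf : RegularlyVarying f atTop b) (hb : 0 < b)
    (hmono : MonotoneOn f (Ioi 0)) (hg_pos : ∀ᶠ t in atTop, 0 < g t)
    (hfg : ∀ᶠ t in atTop, f (g t) = t) : RegularlyVarying g atTop b⁻¹ := by
  intro s hs
  have hg_top := tendsto_atTop_of_monotoneOn_of_rightInverse hmono hg_pos hfg
  have hst : Tendsto (fun t => s * t) atTop atTop := tendsto_id.const_mul_atTop hs
  have hfg_ratio : ∀ c > 0, Tendsto (fun t => f (c * g t) / t) atTop (𝓝 (c ^ b)) := fun c hc =>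
    ((hf c hc).comp hg_top).congr' (hfg.mono fun t ht => by rw [Function.comp_apply, ht])
  refine tendsto_order.2 ⟨fun c hc => ?_, fun c hc => ?_⟩
  · rcases le_or_gt c 0 with hc0 | hc0
    · filter_upwards [hg_pos, hst.eventually hg_pos] with t hgt hgst
      exact hc0.trans_lt (div_pos hgst hgt)
    · have hcs : c ^ b < s := (Real.lt_rpow_inv_iff_of_pos hc0.le hs.le hb).1 hc
      filter_upwards [hg_pos, hst.eventually hg_pos, hst.eventually hfg, eventually_gt_atTop 0,
        (hfg_ratio c hc0).eventually_lt_const hcs] with t hgt hgst hfgst ht hlt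
      rw [div_lt_iff₀ ht, ← hfgst] at hlt
      exact (lt_div_iff₀ hgt).2 (hmono.reflect_lt (mul_pos hc0 hgt) hgst hlt)
  · have hc0 : 0 < c := (Real.rpow_pos_of_pos hs _).trans hc
    have hcs : s < c ^ b := (Real.rpow_inv_lt_iff_of_pos hs.le hc0.le hb).1 hc
    filter_upwards [hg_pos, hst.eventually hg_pos, hst.eventually hfg, eventually_gt_atTop 0,
      (hfg_ratio c hc0).eventually_const_lt hcs] with t hgt hgst hfgst ht hlt
    rw [lt_div_iff₀ ht, ← hfgst] at hlt
    exact (div_lt_iff₀ hgt).2 (hmono.reflect_lt hgst (mul_pos hc0 hgt) hlt)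

theorem sub_mul_le_integral_of_antitoneOn (hφ : AntitoneOn φ (Ioc a b)) (hab : a ≤ b)
    (hint : IntervalIntegrable φ volume a b) : (b - a) * φ b ≤ ∫ u in a..b, φ u := by
  simpa using intervalIntegral.integral_mono_on_of_le_Ioo hab intervalIntegrable_const hint
    fun u hu => hφ (Ioo_subset_Ioc_self hu) (right_mem_Ioc.2 (hu.1.trans hu.2)) hu.2.le

theorem integral_le_sub_mul_of_antitoneOn (hφ : AntitoneOn φ (Icc a b)) (hab : a ≤ b) :
    ∫ u in a..b, φ u ≤ (b - a) * φ a := by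
  have hint : IntervalIntegrable φ volume a b :=
    AntitoneOn.intervalIntegrable (by rwa [uIcc_of_le hab])
  simpa using intervalIntegral.integral_mono_on hab hint intervalIntegrable_const
    fun u hu => hφ (left_mem_Icc.2 hab) hu hu.1

theorem intervalIntegrable_of_antitoneOn_of_norm_le {C : ℝ} (hφ : AntitoneOn φ (Ioc a b))
    (hab : a ≤ b) (hbound : ∀ u ∈ Ioc a b, ‖φ u‖ ≤ C) : IntervalIntegrable φ volume a b :=
  (intervalIntegrable_iff_integrableOn_Ioc_of_le hab).2 <|
    IntegrableOn.of_bound measure_Ioc_lt_top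
      (aemeasurable_restrict_of_antitoneOn measurableSet_Ioc hφ).aestronglyMeasurable C <|
      (ae_restrict_iff' measurableSet_Ioc).2 (.of_forall hbound)

theorem monotoneOn_integral_of_nonneg (hnonneg : ∀ u > 0, 0 ≤ φ u)
    (hint : ∀ x > 0, IntervalIntegrable φ volume 0 x) :
    MonotoneOn (fun x => ∫ u in 0..x, φ u) (Ioi 0) :=
  fun _ hx y hy hxy =>
    intervalIntegral.integral_mono_interval le_rfl (le_of_lt hx) hxy
      ((ae_restrict_iff' measurableSet_Ioc).2 (.of_forall fun u hu => hnonneg u hu.1)) (hint y hy)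

theorem mul_sum_dyadic_le_integral (hnonneg : ∀ u > 0, 0 ≤ φ u)
    (hint : ∀ x > 0, IntervalIntegrable φ volume 0 x) (hanti : AntitoneOn φ (Ioi 0))
    (n : ℕ) {x : ℝ} (hx : 0 < x) :
    x * ∑ k ∈ Finset.range n, (1 / 2) ^ (k + 1) * φ ((1 / 2) ^ k * x) ≤ ∫ u in 0..x, φ u := by
  induction n generalizing x with
  | zero =>
    rw [Finset.sum_range_zero, mul_zero, intervalIntegral.integral_of_le hx.le]
    exact setIntegral_nonneg measurableSet_Ioc fun u hu => hnonneg u hu.1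
  | succ n ih =>
    have hx2 : 0 < x / 2 := half_pos hx
    have htop : (x - x / 2) * φ x ≤ ∫ u in x / 2..x, φ u :=
      sub_mul_le_integral_of_antitoneOn (hanti.mono fun u hu => hx2.trans hu.1) (half_le_self hx.le)
        ((hint _ hx2).symm.trans (hint x hx))
    calc
      x * ∑ k ∈ Finset.range (n + 1), (1 / 2) ^ (k + 1) * φ ((1 / 2) ^ k * x)
        = x / 2 * ∑ k ∈ Finset.range n, (1 / 2) ^ (k + 1) * φ ((1 / 2) ^ k * (x / 2))
            + (x - x / 2) * φ x := by
        rw [Finset.sum_range_succ', mul_add, Finset.mul_sum, Finset.mul_sum]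
        congr 1
        · refine Finset.sum_congr rfl fun k _ => ?_
          rw [show (1 / 2 : ℝ) ^ (k + 1) * x = (1 / 2) ^ k * (x / 2) by ring]
          ring
        · rw [pow_zero, one_mul]
          ring
      _ ≤ (∫ u in 0..x / 2, φ u) + ∫ u in x / 2..x, φ u := add_le_add (ih hx2) htop
      _ = ∫ u in 0..x, φ u := intervalIntegral.integral_add_adjacent_intervals (hint _ hx2)
        ((hint _ hx2).symm.trans (hint x hx))

section IntegralOfPos

variable (hpos : ∀ u > 0, 0 < φ u) (hint : ∀ x > 0, IntervalIntegrable φ volume 0 x)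

include hpos hint

theorem integral_pos_of_pos {x : ℝ} (hx : 0 < x) : 0 < ∫ u in 0..x, φ u :=
  intervalIntegral.intervalIntegral_pos_of_pos_on (hint x hx) (fun u hu => hpos u hu.1) hx

variable (hanti : AntitoneOn φ (Ioi 0))

include hanti

theorem tendsto_integral_div_mul_atTop (hrv : RegularlyVarying φ atTop (-1)) :
    Tendsto (fun x => (∫ u in 0..x, φ u) / (x * φ x)) atTop atTop := by
  have hsum (n : ℕ) : Tendsto
      (fun x => ∑ k ∈ Finset.range n, (1 / 2) ^ (k + 1) * (φ ((1 / 2) ^ k * x) / φ x))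
      atTop (𝓝 (n / 2)) := by
    have hterm (k : ℕ) : (1 / 2 : ℝ) ^ (k + 1) * ((1 / 2) ^ k) ^ (-1 : ℝ) = 1 / 2 := by
      rw [Real.rpow_neg_one, pow_succ']
      exact mul_inv_cancel_right₀ (by positivity) _
    have hlim : ∑ k ∈ Finset.range n, (1 / 2 : ℝ) ^ (k + 1) * ((1 / 2) ^ k) ^ (-1 : ℝ) = n / 2 := by
      simp only [hterm, Finset.sum_const, Finset.card_range, nsmul_eq_mul, mul_one_div]
    exact hlim ▸ tendsto_finsetSum _ fun k _ => (hrv _ (by positivity)).const_mul _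
  refine tendsto_atTop.2 fun M => ?_
  obtain ⟨n, hn⟩ := exists_nat_gt (M * 2)
  filter_upwards [(hsum n).eventually_const_lt ((lt_div_iff₀ two_pos).2 hn),
    eventually_gt_atTop 0] with x hMx hx
  calc
    M ≤ ∑ k ∈ Finset.range n, (1 / 2) ^ (k + 1) * (φ ((1 / 2) ^ k * x) / φ x) := hMx.le
    _ = (x * ∑ k ∈ Finset.range n, (1 / 2) ^ (k + 1) * φ ((1 / 2) ^ k * x)) / (x * φ x) := by
      rw [mul_div_mul_left _ _ hx.ne', Finset.sum_div]
      simp only [mul_div_assoc]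
    _ ≤ (∫ u in 0..x, φ u) / (x * φ x) :=
      div_le_div_of_nonneg_right
        (mul_sum_dyadic_le_integral (fun u hu => (hpos u hu).le) hint hanti n hx)
        (mul_pos hx (hpos x hx)).le

theorem regularlyVarying_integral (hrv : RegularlyVarying φ atTop (-1)) :
    RegularlyVarying (fun x => ∫ u in 0..x, φ u) atTop 0 := by
  refine .of_one_le fun s hs => ?_
  have hbound : Tendsto (fun x => 1 + (s - 1) * ((∫ u in 0..x, φ u) / (x * φ x))⁻¹) atTop
      (𝓝 (s ^ (0 : ℝ))) := by
    simpa using ((tendsto_integral_div_mul_atTop hpos hint hanti hrv).inv_tendsto_atTop.const_mul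
      (s - 1)).const_add 1
  have hsqueeze : ∀ᶠ x in atTop, 1 ≤ (∫ u in 0..s * x, φ u) / ∫ u in 0..x, φ u ∧
      (∫ u in 0..s * x, φ u) / (∫ u in 0..x, φ u)
        ≤ 1 + (s - 1) * ((∫ u in 0..x, φ u) / (x * φ x))⁻¹ := by
    filter_upwards [eventually_gt_atTop 0] with x hx
    have hI := integral_pos_of_pos hpos hint hx
    have hsx : x ≤ s * x := le_mul_of_one_le_left hx.le hs
    have hsx_pos : 0 < s * x := hx.trans_le hsx
    have hmono : ∫ u in 0..x, φ u ≤ ∫ u in 0..s * x, φ u :=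
      monotoneOn_integral_of_nonneg (fun u hu => (hpos u hu).le) hint hx hsx_pos hsx
    refine ⟨(one_le_div₀ hI).2 hmono, ?_⟩
    have hincr : ∫ u in x..s * x, φ u ≤ (s * x - x) * φ x :=
      integral_le_sub_mul_of_antitoneOn (hanti.mono fun u hu => hx.trans_le hu.1) hsx
    rw [← intervalIntegral.integral_interval_sub_left (hint _ hsx_pos) (hint x hx)] at hincr
    rw [inv_div, div_le_iff₀ hI, add_mul, one_mul, mul_assoc, div_mul_cancel₀ _ hI.ne']
    linarith
  exact tendsto_of_tendsto_of_tendsto_of_le_of_le' (by simp) hbound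
    (hsqueeze.mono fun _ h => h.1) (hsqueeze.mono fun _ h => h.2)

theorem regularlyVarying_mul_integral_comp {B : ℝ → ℝ} (hrv : RegularlyVarying φ atTop (-1))
    (hB_pos : ∀ᶠ t in atTop, 0 < B t) (hφB : ∀ᶠ t in atTop, φ (B t) = t⁻¹) :
    RegularlyVarying (fun t => t * ∫ u in 0..B t, φ u) atTop 1 := by
  have hmono : MonotoneOn (fun u => (φ u)⁻¹) (Ioi 0) := fun u hu v hv huv =>
    inv_anti₀ (hpos v hv) (hanti hu hv huv)
  have hright : ∀ᶠ t in atTop, (φ (B t))⁻¹ = t := hφB.mono fun t ht => inv_eq_iff_eq_inv.2 ht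
  have hB_top : Tendsto B atTop atTop :=
    tendsto_atTop_of_monotoneOn_of_rightInverse hmono hB_pos hright
  have hB_rv : RegularlyVarying B atTop 1 := by
    simpa using hrv.inv.rightInverse_of_monotoneOn (by norm_num) hmono hB_pos hright
  have hI_nonneg : ∀ᶠ x in atTop, 0 ≤ ∫ u in 0..x, φ u :=
    (eventually_gt_atTop 0).mono fun x hx => (integral_pos_of_pos hpos hint hx).le
  simpa using regularlyVarying_id_atTop.mul
    ((regularlyVarying_integral hpos hint hanti hrv).comp_of_monotoneOn
      (monotoneOn_integral_of_nonneg (fun u hu => (hpos u hu).le) hint) hI_nonneg hB_rv hB_top)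

end IntegralOfPos

theorem leftInverse_pos_and_apply_eq {G H : ℝ → ℝ} (hGmono : StrictMonoOn G (Ici 0))
    (hGrange : G '' Ici 0 = Ico 0 1) (hH : ∀ u ≥ 0, H (G u) = u) {v : ℝ} (hv : v ∈ Ioo 0 1) :
    0 < H v ∧ G (H v) = v := by
  obtain ⟨w, hw, hGw⟩ : (0 : ℝ) ∈ G '' Ici 0 := hGrange ▸ left_mem_Ico.2 one_pos
  obtain ⟨u, hu, rfl⟩ : v ∈ G '' Ici 0 := hGrange ▸ Ioo_subset_Ico_self hv
  have hwu : w < u := (hGmono.lt_iff_lt hw hu).1 (hGw.trans_lt hv.1)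
  rw [hH u hu]
  exact ⟨hw.trans_lt hwu, rfl⟩

theorem stmt1_general {G H B A : ℝ → ℝ} (hGmono : StrictMonoOn G (Ici 0))
    (hGrange : G '' Ici 0 = Ico 0 1) (hH : ∀ u ≥ 0, H (G u) = u)
    (hB : ∀ t > 1, B t = 1 / H (1 / t))
    (hA : ∀ t > 1, A t = t * ∫ u in Ioc (0 : ℝ) (B t), G (1 / u))
    (hreg : RegularlyVarying G (𝓝[>] 0) 1) : RegularlyVarying A atTop 1 := by
  have hG_mem : ∀ u ≥ 0, G u ∈ Ico (0 : ℝ) 1 := fun u hu => hGrange ▸ mem_image_of_mem G hu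
  have hG_pos : ∀ u > 0, 0 < G u := fun u hu =>
    (hG_mem 0 le_rfl).1.trans_lt (hGmono self_mem_Ici hu.le hu)
  have hanti : AntitoneOn (fun u => G u⁻¹) (Ioi 0) := fun u hu v hv huv =>
    hGmono.monotoneOn (mem_Ici.2 (inv_pos.2 hv).le) (mem_Ici.2 (inv_pos.2 hu).le)
      (inv_anti₀ hu huv)
  have hint : ∀ x > 0, IntervalIntegrable (fun u => G u⁻¹) volume 0 x := fun x hx =>
    intervalIntegrable_of_antitoneOn_of_norm_le (hanti.mono Ioc_subset_Ioi_self) hx.le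
      fun u hu => by
        obtain ⟨hG_nonneg, hG_lt⟩ := hG_mem u⁻¹ (inv_nonneg.2 hu.1.le)
        exact (Real.norm_of_nonneg hG_nonneg).trans_le hG_lt.le
  have hB_inverse : ∀ t > 1, 0 < B t ∧ G (B t)⁻¹ = t⁻¹ := fun t ht => by
    obtain ⟨hH_pos, hGH⟩ := leftInverse_pos_and_apply_eq hGmono hGrange hH
      ⟨inv_pos.2 (zero_lt_one.trans ht), inv_lt_one_of_one_lt₀ ht⟩
    rw [hB t ht, one_div, one_div, inv_inv]
    exact ⟨inv_pos.2 hH_pos, hGH⟩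
  have hB_eventually := (eventually_gt_atTop (1 : ℝ)).mono hB_inverse
  refine (regularlyVarying_mul_integral_comp (fun u hu => hG_pos _ (inv_pos.2 hu)) hint hanti
    hreg.comp_inv (hB_eventually.mono fun t ht => ht.1)
    (hB_eventually.mono fun t ht => ht.2)).congr' ?_
  filter_upwards [eventually_gt_atTop 1] with t ht
  simp only [hA t ht, one_div, intervalIntegral.integral_of_le (hB_inverse t ht).1.le]

end

/-- Let `W` be a random variable with values in `(0,∞)` with continuous
positive Lebesgue density `gW` on `(0,∞)`, CDF `G` (strictly increasing on `[0,∞)` with range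
`[0,1)`), inverse `H`, `B t = 1/H(1/t)` and `A t = t * ∫_0^{B t} G(1/u) du`.  If `G` is
regularly varying at `0` with index `β = 1`, then `A` is regularly varying at `∞` with
index `1`. -/
theorem stmt1
    {Ω : Type*} [MeasureSpace Ω] [IsProbabilityMeasure (ℙ : Measure Ω)]
    (W : Ω → ℝ) (hWmeas : Measurable W)
    (gW : ℝ → ℝ)
    (hgW_pos : ∀ w ∈ Set.Ioi (0 : ℝ), 0 < gW w)
    (hgW_cont : ContinuousOn gW (Set.Ioi 0))
    (hgW_supp : ∀ w ≤ (0 : ℝ), gW w = 0)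
    (hdens : Measure.map W ℙ = volume.withDensity (fun w => ENNReal.ofReal (gW w)))
    (G H B A : ℝ → ℝ)
    (hG : ∀ u, G u = (ℙ {ω | W ω ≤ u}).toReal)
    (hGmono : StrictMonoOn G (Set.Ici 0))
    (hGrange : G '' Set.Ici 0 = Set.Ico 0 1)
    (hH : ∀ u ≥ (0 : ℝ), H (G u) = u)
    (hGH : ∀ v ∈ Set.Ico (0 : ℝ) 1, G (H v) = v)
    (hB : ∀ t, B t = 1 / H (1 / t))
    (hA : ∀ t, A t = t * ∫ u in Set.Ioc (0 : ℝ) (B t), G (1 / u))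
    (hreg : ∀ s > (0 : ℝ),
      Tendsto (fun t => G (s * t) / G t) (nhdsWithin 0 (Set.Ioi 0)) (nhds (s ^ (1 : ℝ)))) :
    ∀ s > (0 : ℝ),
      Tendsto (fun t => A (s * t) / A t) atTop (nhds (s ^ (1 : ℝ))) :=
  stmt1_general hGmono hGrange hH (fun t _ => hB t) (fun t _ => hA t) hreg
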